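/- arXiv:2212.05754 — 6 statements merged into one kernel-verified Lean document; each statement's English description precedes it below -/
import Mathlib

section
/- If χ : ℤ^{2g} → ℂ is a nonzero additive group homomorphism (g ≥ 1), then there exists a symplectic basis α₁, β₁, …, α_g, β_g of ℤ^{2g} such that χ(αᵢ) ≠ 0 and χ(βᵢ) ≠ 0 for every i = 1, …, g. -/
open scoped BigOperators

/-- The standard symplectic (intersection) form on `ℤ^{2g}`, modelling the
intersection pairing on `H₁(S_g; ℤ)`. -/
def symplecticForm (g : ℕ) (x y : Fin (2 * g) → ℤ) : ℤ :=
  ∑ i : Fin g,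
    (x ⟨2 * i.1, by have := i.isLt; omega⟩ * y ⟨2 * i.1 + 1, by have := i.isLt; omega⟩
      - x ⟨2 * i.1 + 1, by have := i.isLt; omega⟩ * y ⟨2 * i.1, by have := i.isLt; omega⟩)

/-- `α₁, β₁, …, α_g, β_g` is a symplectic basis of `ℤ^{2g}`:
`ω(αᵢ, αⱼ) = 0`, `ω(βᵢ, βⱼ) = 0` and `ω(αᵢ, βⱼ) = δᵢⱼ`. -/
def IsSymplecticBasis (g : ℕ) (α β : Fin g → (Fin (2 * g) → ℤ)) : Prop :=
  ∀ i j : Fin g,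
    symplecticForm g (α i) (α j) = 0 ∧ symplecticForm g (β i) (β j) = 0 ∧
      symplecticForm g (α i) (β j) = (if i = j then 1 else 0)

/-!
For an alternating form `ω`, every transvection `x ↦ x + c * ω(v, x) • v` preserves `ω`, so it
carries one symplectic basis to another, and it changes the period of `x` to
`χ x + c * ω(v, x) • χ v`. If `χ v ≠ 0` and `ω(v, x) ≠ 0`, this vanishes for at most one scalar `c`;
hence a generic `c` works for all the basis vectors at once. Such a `v` exists because the kernels
to be avoided have infinite index, and by B. H. Neumann's lemma a group is not the union of
finitely many subgroups of infinite index.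
-/

section InfiniteDomain

variable {R M A ι : Type*} [Ring R] [IsDomain R] [Infinite R] [AddCommGroup M] [Module R M]
  [AddCommGroup A] [Module R A] [Module.IsTorsionFree R A]

theorem not_finiteIndex_ker {f : M →ₗ[R] A} (hf : f ≠ 0) :
    ¬ (LinearMap.ker f).toAddSubgroup.FiniteIndex := by
  intro _
  obtain ⟨x, hx⟩ := DFunLike.ne_iff.mp hf
  obtain ⟨r, s, hrs, heq⟩ := Finite.exists_ne_map_eq_of_infinite
    fun r : R ↦ (QuotientAddGroup.mk (r • x) : M ⧸ (LinearMap.ker f).toAddSubgroup)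
  have hfrs : r • f x = s • f x := by
    simpa [neg_add_eq_zero] using QuotientAddGroup.eq.mp heq
  exact hrs (smul_left_injective R hx hfrs)

theorem exists_forall_add_smul_ne_zero [Finite ι] (a : ι → A) {b : ι → A} (hb : ∀ i, b i ≠ 0) :
    ∃ c : R, ∀ i, a i + c • b i ≠ 0 := by
  have hfin : (⋃ i, {c : R | a i + c • b i = 0}).Finite :=
    Set.finite_iUnion fun i ↦ Set.Subsingleton.finite fun c hc d hd ↦
      smul_left_injective R (hb i) (add_left_cancel (hc.trans hd.symm))
  obtain ⟨c, hc⟩ := hfin.exists_notMem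
  exact ⟨c, by simpa using hc⟩

end InfiniteDomain

theorem exists_forall_notMem_of_not_finiteIndex {G ι : Type*} [AddGroup G] [Finite ι]
    {H : ι → AddSubgroup G} (hH : ∀ i, ¬ (H i).FiniteIndex) : ∃ x, ∀ i, x ∉ H i := by
  have := Fintype.ofFinite ι
  by_contra! hcover
  obtain ⟨i, -, hi⟩ := AddSubgroup.exists_finiteIndex_of_leftCoset_cover
    (H := H) (g := 0) (s := Finset.univ) (by simpa [Set.eq_univ_iff_forall] using hcover)
  exact hH i hi

theorem isOrthogonal_transvection {R M : Type*} [CommRing R] [AddCommGroup M] [Module R M]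
    {B : LinearMap.BilinForm R M} (hB : B.IsAlt) (c : R) (v : M) :
    B.IsOrthogonal (LinearMap.transvection (c • B v) v) := by
  intro x y
  have hxv : B x v = -B v x := (hB.neg_eq v x).symm
  simp only [LinearMap.transvection.apply, LinearMap.smul_apply, map_add, map_smul,
    LinearMap.add_apply, smul_eq_mul, hB.self_eq_zero, hxv]
  ring

theorem exists_isOrthogonal_forall_map_ne_zero {R M A ι : Type*} [CommRing R] [IsDomain R]
    [Infinite R] [AddCommGroup M] [Module R M] [AddCommGroup A] [Module R A]
    [Module.IsTorsionFree R A] [Finite ι] {B : LinearMap.BilinForm R M} (hB : B.IsAlt)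
    {χ : M →ₗ[R] A} (hχ : χ ≠ 0) {e : ι → M} (he : ∀ i, B (e i) ≠ 0) :
    ∃ T : M ≃ₗ[R] M, B.IsOrthogonal T ∧ ∀ i, χ (T (e i)) ≠ 0 := by
  obtain ⟨v, hv⟩ := exists_forall_notMem_of_not_finiteIndex
    (H := fun o : Option ι ↦ o.elim (LinearMap.ker χ).toAddSubgroup
      fun i ↦ (LinearMap.ker (B (e i))).toAddSubgroup)
    (Option.forall.mpr ⟨not_finiteIndex_ker hχ, fun i ↦ not_finiteIndex_ker (he i)⟩)
  obtain ⟨hχv, hev⟩ : χ v ≠ 0 ∧ ∀ i, B v (e i) ≠ 0 := by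
    simpa [Option.forall, hB.isRefl.eq_iff] using hv
  obtain ⟨c, hc⟩ := exists_forall_add_smul_ne_zero (R := R) (fun i ↦ χ (e i))
    fun i ↦ smul_ne_zero (hev i) hχv
  have hfix : (c • B v) v = 0 := by simp [hB.self_eq_zero]
  exact ⟨LinearEquiv.transvection hfix, isOrthogonal_transvection hB c v, fun i ↦ by
    simpa [LinearMap.transvection.apply, mul_smul] using hc i⟩

/-- `symplecticForm g` bundled as a bilinear form over `ℤ`, so that the theory of alternating forms
and transvections applies to it. -/
def symplecticBilinForm (g : ℕ) : LinearMap.BilinForm ℤ (Fin (2 * g) → ℤ) :=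
  LinearMap.mk₂ ℤ (symplecticForm g)
    (fun x y z ↦ by
      simp only [symplecticForm, Pi.add_apply, ← Finset.sum_add_distrib]
      exact Finset.sum_congr rfl fun i _ ↦ by ring)
    (fun c x y ↦ by
      simp only [symplecticForm, Pi.smul_apply, smul_eq_mul, Finset.mul_sum]
      exact Finset.sum_congr rfl fun i _ ↦ by ring)
    (fun x y z ↦ by
      simp only [symplecticForm, Pi.add_apply, ← Finset.sum_add_distrib]
      exact Finset.sum_congr rfl fun i _ ↦ by ring)
    (fun c x y ↦ by
      simp only [symplecticForm, Pi.smul_apply, smul_eq_mul, Finset.mul_sum]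
      exact Finset.sum_congr rfl fun i _ ↦ by ring)

@[simp]
theorem symplecticBilinForm_apply (g : ℕ) (x y : Fin (2 * g) → ℤ) :
    symplecticBilinForm g x y = symplecticForm g x y :=
  rfl

theorem isAlt_symplecticBilinForm (g : ℕ) : (symplecticBilinForm g).IsAlt := fun x ↦ by
  simp [symplecticForm, mul_comm]

namespace IsSymplecticBasis

variable {g : ℕ} {α β : Fin g → (Fin (2 * g) → ℤ)}

theorem comp_isOrthogonal (h : IsSymplecticBasis g α β)
    {T : (Fin (2 * g) → ℤ) → (Fin (2 * g) → ℤ)} (hT : (symplecticBilinForm g).IsOrthogonal T) :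
    IsSymplecticBasis g (T ∘ α) (T ∘ β) := by
  have hT' (x y) : symplecticForm g (T x) (T y) = symplecticForm g x y := hT x y
  simpa only [IsSymplecticBasis, Function.comp_apply, hT'] using h

theorem symplecticBilinForm_alpha_ne_zero (h : IsSymplecticBasis g α β) (i : Fin g) :
    symplecticBilinForm g (α i) ≠ 0 :=
  DFunLike.ne_iff.mpr ⟨β i, by simp [(h i i).2.2]⟩

theorem symplecticBilinForm_beta_ne_zero (h : IsSymplecticBasis g α β) (i : Fin g) :
    symplecticBilinForm g (β i) ≠ 0 :=
  DFunLike.ne_iff.mpr ⟨α i, by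
    simp [← (isAlt_symplecticBilinForm g).neg_eq (α i), (h i i).2.2]⟩

end IsSymplecticBasis

theorem isSymplecticBasis_single (g : ℕ) : IsSymplecticBasis g
    (fun i ↦ Pi.single ⟨2 * i, by lia⟩ 1) (fun i ↦ Pi.single ⟨2 * i + 1, by lia⟩ 1) := by
  intro i j
  have odd_ne_even (a b : ℕ) : 2 * a + 1 ≠ 2 * b := by lia
  simp [symplecticForm, Pi.single_apply, odd_ne_even, (odd_ne_even _ _).symm, Fin.val_inj, eq_comm]

theorem nonzero_periods_on_some_symplectic_basis_general (g : ℕ) {A : Type*} [AddCommGroup A]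
    [IsAddTorsionFree A] (χ : (Fin (2 * g) → ℤ) →+ A) (hχ : χ ≠ 0) :
    ∃ α β : Fin g → (Fin (2 * g) → ℤ), IsSymplecticBasis g α β ∧
      ∀ i : Fin g, χ (α i) ≠ 0 ∧ χ (β i) ≠ 0 := by
  have hstd := isSymplecticBasis_single g
  have hχ' : χ.toIntLinearMap ≠ 0 := AddMonoidHom.toIntLinearMap_injective.ne hχ
  obtain ⟨T, hT, hne⟩ := exists_isOrthogonal_forall_map_ne_zero (isAlt_symplecticBilinForm g) hχ'
    (e := Sum.elim _ _) (Sum.forall.mpr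
      ⟨hstd.symplecticBilinForm_alpha_ne_zero, hstd.symplecticBilinForm_beta_ne_zero⟩)
  exact ⟨_, _, hstd.comp_isOrthogonal hT, fun i ↦ ⟨hne (.inl i), hne (.inr i)⟩⟩

/-- If `χ : ℤ^{2g} → ℂ` is a nonzero additive group homomorphism (`g ≥ 1`), then there exists
a symplectic basis `α₁, β₁, …, α_g, β_g` of `ℤ^{2g}` such that `χ(αᵢ) ≠ 0` and `χ(βᵢ) ≠ 0`
for every `i = 1, …, g`. -/
theorem nonzero_periods_on_some_symplectic_basis (g : ℕ) (hg : 1 ≤ g)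
    (χ : (Fin (2 * g) → ℤ) →+ ℂ) (hχ : χ ≠ 0) :
    ∃ α β : Fin g → (Fin (2 * g) → ℤ), IsSymplecticBasis g α β ∧
      ∀ i : Fin g, χ (α i) ≠ 0 ∧ χ (β i) ≠ 0 :=
  nonzero_periods_on_some_symplectic_basis_general g χ hχ
end

section
/- If χ : M → ℂ is an additive homomorphism of non-trivial-ends type, then there exists a system of handle generators α₁, β₁, …, α_g, β_g in M such that χ(αⱼ) ≠ 0 or χ(βⱼ) ≠ 0 for at least one index j ∈ {1, …, g} (i.e., the genus part of χ induced by this system is nontrivial). -/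
/-!
A handle system remains one when peripheral classes are added to its members, since the intersection
form does not see them. Every class `x` has a translate by a peripheral class outside the kernel of
`χ`: if `χ x = 0`, add a class `v` with `χ v ≠ 0`. So every generator of the standard symplectic
basis can be moved off the kernel.
-/

open scoped BigOperators

/-- `H₁(S_{g,n}; ℤ)` modelled as `ℤ^{2g} ⊕ ℤ^{n-1}`, the second factor being the
peripheral subgroup. -/
abbrev HomologyPunctured (g n : ℕ) := (Fin (2 * g) → ℤ) × (Fin (n - 1) → ℤ)

/-- `α₁, β₁, …, α_g, β_g` is a system of handle generators of `ℤ^{2g} ⊕ ℤ^{n-1}`, with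
respect to the intersection form given by the standard symplectic form on `ℤ^{2g}`
extended by zero on the peripheral factor. -/
def IsHandleSystem (g n : ℕ) (α β : Fin g → HomologyPunctured g n) : Prop :=
  ∀ i j : Fin g,
    symplecticForm g (α i).1 (α j).1 = 0 ∧ symplecticForm g (β i).1 (β j).1 = 0 ∧
      symplecticForm g (α i).1 (β j).1 = (if i = j then 1 else 0)

/-- The coordinate of `ℤ^{2g}` that carries the standard generator `αᵢ`; as in `symplecticForm`,
the standard symplectic basis is ordered `α₁, β₁, …, α_g, β_g`. -/
def alphaIndex {g : ℕ} (i : Fin g) : Fin (2 * g) := ⟨2 * i, by omega⟩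

/-- The coordinate of `ℤ^{2g}` that carries the standard generator `βᵢ`, next to that of `αᵢ`. -/
def betaIndex {g : ℕ} (i : Fin g) : Fin (2 * g) := ⟨2 * i + 1, by omega⟩

section Index

variable {g : ℕ}

theorem alphaIndex_injective : Function.Injective (alphaIndex (g := g)) := fun i j h => by
  simpa [alphaIndex, Fin.ext_iff] using h

theorem betaIndex_injective : Function.Injective (betaIndex (g := g)) := fun i j h => by
  simpa [betaIndex, Fin.ext_iff] using h

theorem alphaIndex_ne_betaIndex (i j : Fin g) : alphaIndex i ≠ betaIndex j := by
  simp only [alphaIndex, betaIndex, ne_eq, Fin.mk.injEq]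
  omega

end Index

section SymplecticForm

variable {g : ℕ}

theorem symplecticForm_eq_sum (x y : Fin (2 * g) → ℤ) :
    symplecticForm g x y =
      ∑ i, (x (alphaIndex i) * y (betaIndex i) - x (betaIndex i) * y (alphaIndex i)) :=
  rfl

theorem symplecticForm_single_alphaIndex (i : Fin g) (c : ℤ) (y : Fin (2 * g) → ℤ) :
    symplecticForm g (Pi.single (alphaIndex i) c) y = c * y (betaIndex i) := by
  simp [symplecticForm_eq_sum, Pi.single_apply, alphaIndex_injective.eq_iff,
    (alphaIndex_ne_betaIndex _ _).symm]

theorem symplecticForm_single_betaIndex (i : Fin g) (c : ℤ) (y : Fin (2 * g) → ℤ) :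
    symplecticForm g (Pi.single (betaIndex i) c) y = -(c * y (alphaIndex i)) := by
  simp [symplecticForm_eq_sum, Pi.single_apply, betaIndex_injective.eq_iff,
    alphaIndex_ne_betaIndex]

end SymplecticForm

theorem isHandleSystem_single {g n : ℕ} (u w : Fin g → Fin (n - 1) → ℤ) :
    IsHandleSystem g n (fun i => (Pi.single (alphaIndex i) 1, u i))
      (fun i => (Pi.single (betaIndex i) 1, w i)) := fun i j => by
  refine ⟨?_, ?_, ?_⟩
  · simp [symplecticForm_single_alphaIndex, (alphaIndex_ne_betaIndex _ _).symm]
  · simp [symplecticForm_single_betaIndex, alphaIndex_ne_betaIndex]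
  · simp [symplecticForm_single_alphaIndex, Pi.single_apply, betaIndex_injective.eq_iff]

theorem exists_map_prodMk_ne_zero {M P A : Type*} [AddZeroClass M] [AddZeroClass P]
    [AddZeroClass A] (f : M × P →+ A) (hf : ∃ v, f (0, v) ≠ 0) (x : M) :
    ∃ v, f (x, v) ≠ 0 := by
  obtain ⟨v, hv⟩ := hf
  by_cases hx : f (x, 0) = 0
  · have map_eq : f (x, v) = f (0, v) :=
      calc
        f (x, v) = f ((x, 0) + (0, v)) := by rw [Prod.mk_add_mk, add_zero, zero_add]
        _ = f (0, v) := by rw [map_add, hx, zero_add]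
    exact ⟨v, map_eq ▸ hv⟩
  · exact ⟨0, hx⟩

theorem handle_system_with_nontrivial_genus_part_general {A : Type*} [AddZeroClass A] (g n : ℕ)
    (χ : HomologyPunctured g n →+ A) (hends : ∃ v : Fin (n - 1) → ℤ, χ (0, v) ≠ 0) :
    ∃ α β : Fin g → HomologyPunctured g n, IsHandleSystem g n α β ∧
      ∀ j : Fin g, χ (α j) ≠ 0 ∧ χ (β j) ≠ 0 := by
  choose v hv using exists_map_prodMk_ne_zero χ hends
  exact ⟨_, _, isHandleSystem_single (fun i => v (Pi.single (alphaIndex i) 1))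
    (fun i => v (Pi.single (betaIndex i) 1)), fun _ => ⟨hv _, hv _⟩⟩

/-- If `χ : M → ℂ` is an additive homomorphism of non-trivial-ends type (its restriction to
the peripheral subgroup `ℤ^{n-1}` is nonzero), then there exists a system of handle generators
`α₁, β₁, …, α_g, β_g` in `M` such that `χ(αⱼ) ≠ 0` or `χ(βⱼ) ≠ 0` for at least one index `j`. -/
theorem handle_system_with_nontrivial_genus_part (g n : ℕ) (hg : 1 ≤ g) (hn : 2 ≤ n)
    (χ : HomologyPunctured g n →+ ℂ)
    (hends : ∃ v : Fin (n - 1) → ℤ, χ (0, v) ≠ 0) :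
    ∃ α β : Fin g → HomologyPunctured g n, IsHandleSystem g n α β ∧
      ∃ j : Fin g, χ (α j) ≠ 0 ∨ χ (β j) ≠ 0 := by
  obtain ⟨α, β, hαβ, hχ⟩ := handle_system_with_nontrivial_genus_part_general g n χ hends
  exact ⟨α, β, hαβ, ⟨0, hg⟩, Or.inl (hχ _).1⟩
end

section
/- If χ : M → ℂ is an additive homomorphism of non-trivial-ends type which is not real-collinear, then there exists a system of handle generators α₁, β₁, …, α_g, β_g in M whose volume is positive, i.e. Σᵢ₌₁^g Im(conj(χ(αᵢ)) · χ(βᵢ)) > 0. -/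
open scoped BigOperators

/-- `χ` is real-collinear: its image is contained in `ℝ·c` for some `c ∈ ℂ`. -/
def RealCollinear {M : Type*} [AddCommGroup M] (χ : M →+ ℂ) : Prop :=
  ∃ c : ℂ, ∀ x : M, ∃ r : ℝ, χ x = (r : ℂ) * c

/-!
Write `ω w z = Im(conj w * z)` for the area form of `ℂ`. Adding `k` times a peripheral class `p` to
`αᵢ` keeps a handle system and changes its volume by `k * ω (χ p) (χ βᵢ)`, so the volume can be made
positive as soon as `ω (χ p) (χ βᵢ) ≠ 0`. Such a handle system exists when `χ p ≠ 0`: the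
homomorphism `ω (χ p) ∘ χ` is nonzero because `χ` is not real-collinear, whereas a homomorphism
killing every `βᵢ` of every handle system also kills every `αᵢ`, by the exchange
`(α, β) ↦ (β, -α)`, and every peripheral class, as a difference of two admissible values of `αᵢ`;
these elements generate the homology.
-/

lemma exists_lt_add_zsmul {G : Type*} [AddCommGroup G] [LinearOrder G] [IsOrderedAddMonoid G]
    [Archimedean G] {b : G} (hb : b ≠ 0) (a c : G) : ∃ k : ℤ, c < a + k • b := by
  rcases hb.lt_or_gt with hneg | hpos
  · obtain ⟨k, hk, -⟩ := existsUnique_add_zsmul_mem_Ioc (neg_pos.2 hneg) a c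
    exact ⟨-k, by simpa only [neg_smul, smul_neg] using hk.1⟩
  · obtain ⟨k, hk, -⟩ := existsUnique_add_zsmul_mem_Ioc hpos a c
    exact ⟨k, hk.1⟩

attribute [local instance] Complex.finrank_real_complex_fact

local notation "ω" => Complex.orientation.areaForm

lemma exists_eq_ofReal_mul_of_areaForm_eq_zero {c z : ℂ} (hc : c ≠ 0) (h : ω c z = 0) :
    ∃ r : ℝ, z = r * c := by
  have him : (z / c).im = 0 := by
    rw [Complex.areaForm] at h
    rw [div_eq_mul_inv, Complex.inv_def, ← mul_assoc, Complex.im_mul_ofReal, mul_comm z, h,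
      zero_mul]
  refine ⟨(z / c).re, ?_⟩
  rw [Complex.conj_eq_iff_re.1 (Complex.conj_eq_iff_im.2 him), div_mul_cancel₀ z hc]

section SymplecticForm

variable {g : ℕ} (x y : Fin (2 * g) → ℤ)

lemma symplecticForm_swap : symplecticForm g x y = -symplecticForm g y x := by
  simp only [symplecticForm, ← Finset.sum_neg_distrib]
  exact Finset.sum_congr rfl fun i _ ↦ by ring

lemma symplecticForm_neg_right : symplecticForm g x (-y) = -symplecticForm g x y := by
  simp only [symplecticForm, Pi.neg_apply, ← Finset.sum_neg_distrib]
  exact Finset.sum_congr rfl fun i _ ↦ by ring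

end SymplecticForm

namespace IsHandleSystem

variable {g n : ℕ} {α β : Fin g → HomologyPunctured g n}

lemma swap_neg (h : IsHandleSystem g n α β) : IsHandleSystem g n β (-α) := by
  intro i j
  refine ⟨(h i j).2.1, ?_, ?_⟩
  · rw [Pi.neg_apply, Pi.neg_apply, Prod.fst_neg, Prod.fst_neg, symplecticForm_neg_right,
      ← symplecticForm_swap, symplecticForm_neg_right, (h j i).1, neg_zero]
  · rw [Pi.neg_apply, Prod.fst_neg, symplecticForm_neg_right, ← symplecticForm_swap, (h j i).2.2]
    simp only [eq_comm]

lemma add_peripheral_left (h : IsHandleSystem g n α β) {p : Fin g → HomologyPunctured g n}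
    (hp : ∀ i, (p i).1 = 0) : IsHandleSystem g n (α + p) β := by
  simpa only [IsHandleSystem, Pi.add_apply, Prod.fst_add, hp, add_zero] using h

end IsHandleSystem

section Standard

variable {g n : ℕ}

/-- The standard generator `αᵢ`, with no peripheral component. In the coordinates used by
`symplecticForm`, the `i`-th handle occupies the positions `2 * i` and `2 * i + 1`. -/
def standardAlpha (g n : ℕ) (i : Fin g) : HomologyPunctured g n :=
  (Pi.single ⟨2 * i.1, by lia⟩ 1, 0)

/-- The standard generator `βᵢ`, the symplectic dual of `standardAlpha g n i`. -/
def standardBeta (g n : ℕ) (i : Fin g) : HomologyPunctured g n :=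
  (Pi.single ⟨2 * i.1 + 1, by lia⟩ 1, 0)

lemma isHandleSystem_standard (g n : ℕ) :
    IsHandleSystem g n (standardAlpha g n) (standardBeta g n) := by
  have odd_ne_even (a b : ℕ) : 2 * a + 1 ≠ 2 * b := by lia
  have even_ne_odd (a b : ℕ) : 2 * a ≠ 2 * b + 1 := by lia
  intro i j
  refine ⟨?_, ?_, ?_⟩ <;>
    simp [symplecticForm, standardAlpha, standardBeta, Pi.single_apply, odd_ne_even, even_ne_odd,
      ← Fin.ext_iff, eq_comm]

lemma addMonoidHom_ext_standard {A : Type*} [AddCommMonoid A] {f f' : HomologyPunctured g n →+ A}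
    (hα : ∀ i, f (standardAlpha g n i) = f' (standardAlpha g n i))
    (hβ : ∀ i, f (standardBeta g n i) = f' (standardBeta g n i))
    (hperipheral : ∀ v, f (0, v) = f' (0, v)) : f = f' := by
  have hsingle (j : Fin (2 * g)) : f (Pi.single j 1, 0) = f' (Pi.single j 1, 0) := by
    obtain ⟨m, hm | hm⟩ := Nat.even_or_odd' j.1
    · rw [show j = ⟨2 * m, by lia⟩ from Fin.ext hm]
      exact hα ⟨m, by lia⟩
    · rw [show j = ⟨2 * m + 1, by lia⟩ from Fin.ext hm]
      exact hβ ⟨m, by lia⟩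
  have hinl : f.comp (AddMonoidHom.inl _ _) = f'.comp (AddMonoidHom.inl _ _) := by
    ext j
    exact hsingle j
  have hinr : f.comp (AddMonoidHom.inr _ _) = f'.comp (AddMonoidHom.inr _ _) :=
    AddMonoidHom.ext hperipheral
  rw [← AddMonoidHom.coprod_unique f, hinl, hinr, AddMonoidHom.coprod_unique]

lemma exists_isHandleSystem_apply_beta_ne_zero {A : Type*} [AddCommGroup A] (hg : 1 ≤ g)
    {f : HomologyPunctured g n →+ A} (hf : f ≠ 0) :
    ∃ α β : Fin g → HomologyPunctured g n, IsHandleSystem g n α β ∧ ∃ i, f (β i) ≠ 0 := by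
  by_contra! hβ
  have hα (α β : Fin g → HomologyPunctured g n) (h : IsHandleSystem g n α β) (i : Fin g) :
      f (α i) = 0 := by
    simpa only [Pi.neg_apply, map_neg, neg_eq_zero] using hβ _ _ h.swap_neg i
  have hstd := isHandleSystem_standard g n
  refine hf (addMonoidHom_ext_standard (hα _ _ hstd) (hβ _ _ hstd) fun v ↦ ?_)
  have hshift := hα _ _ (hstd.add_peripheral_left (p := fun _ ↦ (0, v)) fun _ ↦ rfl) ⟨0, hg⟩
  rwa [Pi.add_apply, map_add, hα _ _ hstd, zero_add] at hshift

end Standard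

section Volume

variable {M ι : Type*} [AddCommGroup M] [Fintype ι] (χ : M →+ ℂ)

/-- The volume `∑ᵢ Im(conj(χ(αᵢ)) · χ(βᵢ))` of a period character `χ` with respect to arbitrary
families `α` and `β`, which makes it biadditive in `α` and `β`. -/
noncomputable def handleVolume (α β : ι → M) : ℝ :=
  ∑ i, ω (χ (α i)) (χ (β i))

lemma handleVolume_add_left (α α' β : ι → M) :
    handleVolume χ (α + α') β = handleVolume χ α β + handleVolume χ α' β := by
  simp only [handleVolume, Pi.add_apply, map_add, LinearMap.add_apply, Finset.sum_add_distrib]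

lemma handleVolume_single_left [DecidableEq ι] (i : ι) (x : M) (β : ι → M) :
    handleVolume χ (Pi.single i x) β = ω (χ x) (χ (β i)) := by
  rw [handleVolume, Fintype.sum_eq_single i fun j hj ↦ ?_, Pi.single_eq_same]
  rw [Pi.single_eq_of_ne hj, map_zero, map_zero, LinearMap.zero_apply]

end Volume

lemma IsHandleSystem.exists_handleVolume_pos {g n : ℕ} {α β : Fin g → HomologyPunctured g n}
    (h : IsHandleSystem g n α β) (χ : HomologyPunctured g n →+ ℂ) {v : Fin (n - 1) → ℤ} {i : Fin g}
    (hi : ω (χ (0, v)) (χ (β i)) ≠ 0) :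
    ∃ α' : Fin g → HomologyPunctured g n, IsHandleSystem g n α' β ∧ 0 < handleVolume χ α' β := by
  obtain ⟨k, hk⟩ := exists_lt_add_zsmul hi (handleVolume χ α β) 0
  refine ⟨α + Pi.single i (k • (0, v)), h.add_peripheral_left fun j ↦ ?_, ?_⟩
  · obtain rfl | hj := eq_or_ne j i
    · rw [Pi.single_eq_same, Prod.smul_fst, smul_zero]
    · rw [Pi.single_eq_of_ne hj, Prod.fst_zero]
  · rwa [handleVolume_add_left, handleVolume_single_left, map_zsmul, map_zsmul,
      LinearMap.smul_apply]

/-- If `χ : M → ℂ` is an additive homomorphism of non-trivial-ends type which is not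
real-collinear, then there exists a system of handle generators `α₁, β₁, …, α_g, β_g` in `M`
whose volume is positive, i.e. `Σᵢ Im(conj(χ(αᵢ)) · χ(βᵢ)) > 0`. -/
theorem handle_system_with_positive_volume (g n : ℕ) (hg : 1 ≤ g) (hn : 2 ≤ n)
    (χ : HomologyPunctured g n →+ ℂ)
    (hends : ∃ v : Fin (n - 1) → ℤ, χ (0, v) ≠ 0)
    (hcol : ¬ RealCollinear χ) :
    ∃ α β : Fin g → HomologyPunctured g n, IsHandleSystem g n α β ∧
      0 < ∑ i : Fin g, ((starRingEnd ℂ) (χ (α i)) * χ (β i)).im := by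
  obtain ⟨v, hv⟩ := hends
  let f : HomologyPunctured g n →+ ℝ := (ω (χ (0, v))).toAddMonoidHom.comp χ
  have hf : f ≠ 0 := fun hf ↦ hcol
    ⟨χ (0, v), fun x ↦ exists_eq_ofReal_mul_of_areaForm_eq_zero hv (DFunLike.congr_fun hf x)⟩
  obtain ⟨α, β, hαβ, i, hi⟩ := exists_isHandleSystem_apply_beta_ne_zero hg hf
  obtain ⟨α', hα'β, hpos⟩ := hαβ.exists_handleVolume_pos χ hi
  refine ⟨α', β, hα'β, ?_⟩
  simpa only [handleVolume, Complex.areaForm] using hpos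
end

section
/- If χ : M → ℂ is an additive homomorphism of non-trivial-ends type which is not real-collinear, then there exists a system of handle generators α₁, β₁, …, α_g, β_g in M such that Im(conj(χ(αᵢ)) · χ(βᵢ)) > 0 for every i = 1, …, g (every handle has positive volume). -/
open scoped BigOperators

/-!
Let `v` be a peripheral class with `χ v = w ≠ 0`, and let `l x` be the signed area of the
parallelogram spanned by `χ x` and `w`. Adding `k • v` to `βᵢ` leaves the intersection numbers
unchanged and adds `k * l αᵢ` to the volume of the `i`-th handle, so every volume can be made
positive as soon as no `l αᵢ` vanishes. As `χ` is not real-collinear, `l` is nonzero, hence nonzero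
on a peripheral class or on some handle generator; peripheral shifts or a symplectic shear spread
this nonvanishing to all the `αᵢ`.
-/

/-- The families `a` and `b` have the intersection numbers of a symplectic basis with respect to the
bilinear form `B`. They are not required to be a basis of `M`. -/
structure IsSymplecticFamily {ι R M : Type*} [DecidableEq ι] [CommRing R] [AddCommGroup M]
    [Module R M] (B : LinearMap.BilinForm R M) (a b : ι → M) : Prop where
  left_left : ∀ i j, B (a i) (a j) = 0
  right_right : ∀ i j, B (b i) (b j) = 0
  left_right : ∀ i j, B (a i) (b j) = if i = j then 1 else 0

namespace IsSymplecticFamily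

variable {ι R M : Type*} [DecidableEq ι] [CommRing R] [AddCommGroup M] [Module R M]
  {B : LinearMap.BilinForm R M} {a b : ι → M}

theorem swap_neg (h : IsSymplecticFamily B a b) (hB : B.IsAlt) : IsSymplecticFamily B b (-a) where
  left_left := h.right_right
  right_right i j := by simp [h.left_left i j]
  left_right i j := by simp [hB.neg_eq, h.left_right j i, eq_comm]

theorem add_of_mem_ker (h : IsSymplecticFamily B a b) (hB : B.IsAlt) {p q : ι → M}
    (hp : ∀ i, p i ∈ LinearMap.ker B) (hq : ∀ i, q i ∈ LinearMap.ker B) :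
    IsSymplecticFamily B (a + p) (b + q) := by
  have ker_left {x : M} (hx : x ∈ LinearMap.ker B) (y : M) : B x y = 0 :=
    DFunLike.congr_fun (LinearMap.mem_ker.mp hx) y
  have ker_right (y : M) {x : M} (hx : x ∈ LinearMap.ker B) : B y x = 0 :=
    hB.isRefl x y (ker_left hx y)
  constructor <;> intro i j
  · simpa [ker_left (hp i), ker_right _ (hp j)] using h.left_left i j
  · simpa [ker_left (hq i), ker_right _ (hq j)] using h.right_right i j
  · simpa [ker_left (hp i), ker_right _ (hq j)] using h.left_right i j

theorem shear [Fintype ι] (h : IsSymplecticFamily B a b) {i₀ : ι} {c : ι → R}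
    (hc : c i₀ = 0) :
    IsSymplecticFamily B (fun i => a i + c i • a i₀) (b - Pi.single i₀ (∑ k, c k • b k)) := by
  have sum_right (i : ι) : B (a i) (∑ k, c k • b k) = c i := by simp [h.left_right]
  constructor <;> intro i j
  · simp [h.left_left]
  · simp [Pi.single_apply, h.right_right, apply_ite, ite_apply]
  · rcases eq_or_ne j i₀ with rfl | hj
    · simp [h.left_right, sum_right, hc]
    · simp [h.left_right, hj, hj.symm]

variable {N : Type*} [AddCommGroup N] [Module R N]

theorem exists_forall_map_left_ne_zero_of_left [Finite ι] (h : IsSymplecticFamily B a b)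
    (l : M →ₗ[R] N) {i₀ : ι} (hi₀ : l (a i₀) ≠ 0) :
    ∃ a' b' : ι → M, IsSymplecticFamily B a' b' ∧ ∀ i, l (a' i) ≠ 0 := by
  classical
  have := Fintype.ofFinite ι
  refine ⟨_, _, h.shear (i₀ := i₀) (c := fun i => if l (a i) = 0 then 1 else 0)
    (if_neg hi₀), fun i => ?_⟩
  by_cases hi : l (a i) = 0 <;> simp [hi, hi₀]

theorem exists_forall_map_left_ne_zero_of_ker (h : IsSymplecticFamily B a b) (hB : B.IsAlt)
    (l : M →ₗ[R] N) {v : M} (hv : v ∈ LinearMap.ker B) (hlv : l v ≠ 0) :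
    ∃ a' b' : ι → M, IsSymplecticFamily B a' b' ∧ ∀ i, l (a' i) ≠ 0 := by
  classical
  refine ⟨_, _, h.add_of_mem_ker hB (p := fun i => if l (a i) = 0 then v else 0) (q := 0)
    (fun i => ?_) (fun _ => zero_mem _), fun i => ?_⟩
  · split_ifs
    exacts [hv, zero_mem _]
  · by_cases hi : l (a i) = 0 <;> simp [hi, hlv]

theorem exists_forall_map_left_ne_zero [Finite ι] (h : IsSymplecticFamily B a b) (hB : B.IsAlt)
    (hspan : LinearMap.ker B ⊔ Submodule.span R (Set.range a ∪ Set.range b) = ⊤)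
    {l : M →ₗ[R] N} (hl : l ≠ 0) :
    ∃ a' b' : ι → M, IsSymplecticFamily B a' b' ∧ ∀ i, l (a' i) ≠ 0 := by
  by_cases hker : LinearMap.ker B ≤ LinearMap.ker l
  · by_cases ha : ∃ i, l (a i) ≠ 0
    · obtain ⟨i, hi⟩ := ha
      exact h.exists_forall_map_left_ne_zero_of_left l hi
    by_cases hb : ∃ i, l (b i) ≠ 0
    · obtain ⟨i, hi⟩ := hb
      exact (h.swap_neg hB).exists_forall_map_left_ne_zero_of_left l hi
    push Not at ha hb
    have hrange : Set.range a ∪ Set.range b ⊆ LinearMap.ker l := by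
      rintro _ (⟨i, rfl⟩ | ⟨i, rfl⟩)
      exacts [ha i, hb i]
    have htop : ⊤ ≤ LinearMap.ker l := hspan ▸ sup_le hker (Submodule.span_le.mpr hrange)
    exact absurd (LinearMap.ker_eq_top.mp (top_le_iff.mp htop)) hl
  · obtain ⟨v, hv, hlv⟩ := SetLike.not_le_iff_exists.mp hker
    exact h.exists_forall_map_left_ne_zero_of_ker hB l hv hlv

end IsSymplecticFamily

theorem exists_pos_add_zsmul {A : Type*} [AddCommGroup A] [LinearOrder A] [IsOrderedAddMonoid A]
    [Archimedean A] (t : A) {s : A} (hs : s ≠ 0) : ∃ k : ℤ, 0 < t + k • s := by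
  obtain ⟨m, hm⟩ := exists_lt_nsmul (abs_pos.mpr hs) (-t)
  rw [neg_lt_iff_pos_add'] at hm
  rcases abs_choice s with habs | habs <;> rw [habs] at hm
  · exact ⟨m, by simpa using hm⟩
  · exact ⟨-m, by simpa using hm⟩

section Area

variable {M : Type*} [AddCommGroup M]

/-- The `ℤ`-linear functional sending `x` to the signed area `Im (conj (χ x) * w)` of the
parallelogram spanned by `χ x` and `w`. -/
def areaFunctional (χ : M →+ ℂ) (w : ℂ) : M →ₗ[ℤ] ℝ :=
  (Complex.imAddGroupHom.comp
    ((AddMonoidHom.mulRight w).comp ((starRingEnd ℂ).toAddMonoidHom.comp χ))).toIntLinearMap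

theorem areaFunctional_apply (χ : M →+ ℂ) (w : ℂ) (x : M) :
    areaFunctional χ w x = ((starRingEnd ℂ) (χ x) * w).im :=
  rfl

theorem eq_re_div_mul_of_im_conj_mul_eq_zero {z w : ℂ} (hw : w ≠ 0)
    (h : ((starRingEnd ℂ) z * w).im = 0) : z = ((z / w).re : ℂ) * w := by
  have him : (z / w).im = 0 := by
    calc (z / w).im = -((starRingEnd ℂ) z * w).im / Complex.normSq w := by
          simp only [Complex.div_im, Complex.mul_im, Complex.conj_re, Complex.conj_im]
          ring
      _ = 0 := by simp [h]
  have hreal : ((z / w).re : ℂ) = z / w := Complex.ext rfl (by simp [him])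
  rw [hreal, div_mul_cancel₀ z hw]

theorem areaFunctional_ne_zero {χ : M →+ ℂ} (hχ : ¬ RealCollinear χ) {w : ℂ} (hw : w ≠ 0) :
    areaFunctional χ w ≠ 0 := fun h =>
  hχ ⟨w, fun x => ⟨_, eq_re_div_mul_of_im_conj_mul_eq_zero hw (DFunLike.congr_fun h x)⟩⟩

theorem handle_system_all_handles_positive_volume_general {ι : Type*} [Finite ι] [DecidableEq ι]
    {B : LinearMap.BilinForm ℤ M} (hB : B.IsAlt) {a b : ι → M} (hab : IsSymplecticFamily B a b)
    (hspan : LinearMap.ker B ⊔ Submodule.span ℤ (Set.range a ∪ Set.range b) = ⊤)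
    {χ : M →+ ℂ} (hends : ∃ v ∈ LinearMap.ker B, χ v ≠ 0) (hcol : ¬ RealCollinear χ) :
    ∃ α β : ι → M, IsSymplecticFamily B α β ∧
      ∀ i, 0 < ((starRingEnd ℂ) (χ (α i)) * χ (β i)).im := by
  obtain ⟨v, hv, hχv⟩ := hends
  obtain ⟨α, β, hαβ, hα⟩ :=
    hab.exists_forall_map_left_ne_zero hB hspan (areaFunctional_ne_zero hcol hχv)
  choose k hk using fun i =>
    exists_pos_add_zsmul ((starRingEnd ℂ) (χ (α i)) * χ (β i)).im (hα i)
  have hshift : IsSymplecticFamily B (α + 0) (β + fun i => k i • v) :=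
    hαβ.add_of_mem_ker hB (fun _ => zero_mem _) fun i => zsmul_mem hv (k i)
  refine ⟨_, _, hshift, fun i => ?_⟩
  simpa [areaFunctional_apply, mul_add, mul_left_comm] using hk i

end Area

/-- Position in `ℤ^{2g}` of the first coordinate of the `i`-th handle. -/
def evenIndex {g : ℕ} (i : Fin g) : Fin (2 * g) :=
  ⟨2 * i.1, by omega⟩

/-- Position in `ℤ^{2g}` of the second coordinate of the `i`-th handle. -/
def oddIndex {g : ℕ} (i : Fin g) : Fin (2 * g) :=
  ⟨2 * i.1 + 1, by omega⟩

theorem evenIndex_injective {g : ℕ} : Function.Injective (evenIndex (g := g)) := fun i j h => by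
  simpa [evenIndex, Fin.ext_iff] using h

theorem oddIndex_injective {g : ℕ} : Function.Injective (oddIndex (g := g)) := fun i j h => by
  simpa [oddIndex, Fin.ext_iff] using h

theorem evenIndex_ne_oddIndex {g : ℕ} (i j : Fin g) : evenIndex i ≠ oddIndex j := by
  simp only [evenIndex, oddIndex, ne_eq, Fin.mk.injEq]
  omega

theorem exists_eq_evenIndex_or_eq_oddIndex {g : ℕ} (k : Fin (2 * g)) :
    ∃ i : Fin g, k = evenIndex i ∨ k = oddIndex i := by
  refine ⟨⟨k / 2, by omega⟩, ?_⟩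
  simp only [evenIndex, oddIndex, Fin.ext_iff]
  omega

/-- The intersection form on `ℤ^{2g} ⊕ ℤ^{n-1}`, as a bilinear form. -/
def intersectionForm (g n : ℕ) : LinearMap.BilinForm ℤ (HomologyPunctured g n) :=
  let coord (k : Fin (2 * g)) : HomologyPunctured g n →ₗ[ℤ] ℤ :=
    LinearMap.proj k ∘ₗ LinearMap.fst ℤ _ _
  ∑ i : Fin g,
    (.linMulLin (coord (evenIndex i)) (coord (oddIndex i)) -
      .linMulLin (coord (oddIndex i)) (coord (evenIndex i)))

namespace intersectionForm

variable {g n : ℕ}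

theorem apply_eq_symplecticForm (x y : HomologyPunctured g n) :
    intersectionForm g n x y = symplecticForm g x.1 y.1 := by
  simp [intersectionForm, symplecticForm, evenIndex, oddIndex]

theorem isAlt : (intersectionForm g n).IsAlt := fun x => by
  simp [apply_eq_symplecticForm, symplecticForm, mul_comm]

theorem mk_zero_mem_ker (v : Fin (n - 1) → ℤ) :
    ((0, v) : HomologyPunctured g n) ∈ LinearMap.ker (intersectionForm g n) := by
  ext <;> simp [apply_eq_symplecticForm, symplecticForm]

end intersectionForm

theorem isHandleSystem_iff_isSymplecticFamily {g n : ℕ} {α β : Fin g → HomologyPunctured g n} :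
    IsHandleSystem g n α β ↔ IsSymplecticFamily (intersectionForm g n) α β := by
  simp only [IsHandleSystem, ← intersectionForm.apply_eq_symplecticForm]
  exact ⟨fun h => ⟨fun i j => (h i j).1, fun i j => (h i j).2.1, fun i j => (h i j).2.2⟩,
    fun h i j => ⟨h.left_left i j, h.right_right i j, h.left_right i j⟩⟩

/-- The first generator of the `i`-th standard handle, a basis vector of `ℤ^{2g}`. -/
def standardHandleLeft (g n : ℕ) (i : Fin g) : HomologyPunctured g n :=
  (Pi.single (evenIndex i) 1, 0)

/-- The second generator of the `i`-th standard handle, a basis vector of `ℤ^{2g}`. -/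
def standardHandleRight (g n : ℕ) (i : Fin g) : HomologyPunctured g n :=
  (Pi.single (oddIndex i) 1, 0)

theorem isSymplecticFamily_standardHandle (g n : ℕ) :
    IsSymplecticFamily (intersectionForm g n) (standardHandleLeft g n)
      (standardHandleRight g n) := by
  constructor <;> intro i j <;>
    simp [intersectionForm, standardHandleLeft, standardHandleRight, Pi.single_apply,
      evenIndex_ne_oddIndex, (evenIndex_ne_oddIndex _ _).symm, evenIndex_injective.eq_iff,
      oddIndex_injective.eq_iff, eq_comm]

theorem ker_intersectionForm_sup_span_standardHandle (g n : ℕ) :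
    LinearMap.ker (intersectionForm g n) ⊔ Submodule.span ℤ
      (Set.range (standardHandleLeft g n) ∪ Set.range (standardHandleRight g n)) = ⊤ := by
  have basis_mem (k : Fin (2 * g)) : ((Pi.single k 1, 0) : HomologyPunctured g n) ∈
      Set.range (standardHandleLeft g n) ∪ Set.range (standardHandleRight g n) := by
    obtain ⟨i, rfl | rfl⟩ := exists_eq_evenIndex_or_eq_oddIndex k
    exacts [.inl ⟨i, rfl⟩, .inr ⟨i, rfl⟩]
  refine eq_top_iff.mpr fun ⟨y, v⟩ _ => Submodule.mem_sup.mpr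
    ⟨(0, v), intersectionForm.mk_zero_mem_ker v, (y, 0), ?_, by simp⟩
  have hy : ((y, 0) : HomologyPunctured g n) = ∑ k, y k • (Pi.single k 1, 0) := by
    ext k <;> simp [Prod.fst_sum, Prod.snd_sum, Pi.single_apply]
  rw [hy]
  exact Submodule.sum_smul_mem _ _ fun k _ => Submodule.subset_span (basis_mem k)

/-- If `χ : M → ℂ` is an additive homomorphism of non-trivial-ends type which is not
real-collinear, then there exists a system of handle generators `α₁, β₁, …, α_g, β_g` in `M`
such that `Im(conj(χ(αᵢ)) · χ(βᵢ)) > 0` for every `i` (every handle has positive volume). -/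
theorem handle_system_all_handles_positive_volume (g n : ℕ) (hg : 1 ≤ g) (hn : 2 ≤ n)
    (χ : HomologyPunctured g n →+ ℂ)
    (hends : ∃ v : Fin (n - 1) → ℤ, χ (0, v) ≠ 0)
    (hcol : ¬ RealCollinear χ) :
    ∃ α β : Fin g → HomologyPunctured g n, IsHandleSystem g n α β ∧
      ∀ i : Fin g, 0 < ((starRingEnd ℂ) (χ (α i)) * χ (β i)).im := by
  simp only [isHandleSystem_iff_isSymplecticFamily]
  obtain ⟨v, hv⟩ := hends
  exact handle_system_all_handles_positive_volume_general intersectionForm.isAlt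
    (isSymplecticFamily_standardHandle g n)
    (ker_intersectionForm_sup_span_standardHandle g n)
    ⟨(0, v), intersectionForm.mk_zero_mem_ker v, hv⟩ hcol
end

section
/- Let n ≥ 2 and let w₁, …, w_n be nonzero real numbers with w₁ + ⋯ + w_n = 0. If there exist indices i, j such that the ratio wᵢ/wⱼ is irrational, then the family satisfies the reordering property: there exist a permutation σ of {1, …, n} and an integer h with 1 ≤ h ≤ n − 1 such that w_{σ(i)} > 0 for all 1 ≤ i ≤ h, w_{σ(i)} < 0 for all h + 1 ≤ i ≤ n, and for all integers s, t with 1 ≤ s ≤ h and h ≤ t ≤ n, the equality Σ_{i=1}^{s} w_{σ(i)} = − Σ_{j=t+1}^{n} w_{σ(j)} implies s = h and t = h. -/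
open scoped BigOperators

/-!
Let `S` be the sum of the positive entries. Not every entry is a rational multiple of `S`, so some
`ℚ`-linear functional `p` kills `S` without killing every entry. List the positive entries by
decreasing `p`, then the negative ones by increasing `p`. Both blocks have `p`-sum zero, so an
initial part of the first block and a final part of the second have nonnegative `p`-sums. If these
parts cancel, then either both are whole blocks or both are proper. In the second case their
`p`-sums are opposite, hence zero; for a proper nonempty part of a sorted block with zero sum this
forces `p` to vanish on the whole block, so `p` kills every entry, a contradiction.
-/

/-- `A` is a top part of `P` for the key `g`: an initial segment of some enumeration of `P` by
decreasing `g`, ties being broken arbitrarily. -/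
structure IsTopPart {ι N : Type*} [LE N] (g : ι → N) (A P : Finset ι) : Prop where
  subset : A ⊆ P
  le : ∀ x ∈ A, ∀ y ∈ P, y ∉ A → g y ≤ g x

namespace IsTopPart

variable {ι N : Type*} [AddCommGroup N] [LinearOrder N] [IsOrderedAddMonoid N] {g : ι → N}
  {A P : Finset ι}

theorem sum_nonneg (h : IsTopPart g A P) (hP : ∑ i ∈ P, g i = 0) : 0 ≤ ∑ i ∈ A, g i := by
  classical
  by_contra! hA
  have hrest : 0 < ∑ i ∈ P \ A, g i := by
    rw [← Finset.sum_sdiff h.subset, add_eq_zero_iff_eq_neg] at hP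
    rwa [hP, neg_pos]
  obtain ⟨x, hx, hgx⟩ : ∃ x ∈ A, g x < 0 := Finset.exists_lt_of_sum_lt (by simpa using hA)
  obtain ⟨y, hy, hgy⟩ : ∃ y ∈ P \ A, 0 < g y := Finset.exists_lt_of_sum_lt (by simpa using hrest)
  rw [Finset.mem_sdiff] at hy
  exact (hgx.trans hgy).not_ge (h.le x hx y hy.1 hy.2)

theorem eq_zero_of_sum_eq_zero (h : IsTopPart g A P) (hP : ∑ i ∈ P, g i = 0)
    (hA : ∑ i ∈ A, g i = 0) (hne : A.Nonempty) (hAP : A ≠ P) : ∀ i ∈ P, g i = 0 := by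
  classical
  have hrest : ∑ i ∈ P \ A, g i = 0 := by
    simpa [hA, hP] using Finset.sum_sdiff (f := g) h.subset
  have hrest_ne : (P \ A).Nonempty :=
    Finset.sdiff_nonempty.2 fun hPA => hAP (h.subset.antisymm hPA)
  obtain ⟨x, hx, hgx⟩ : ∃ x ∈ A, g x ≤ 0 := Finset.exists_le_of_sum_le hne (by simp [hA])
  obtain ⟨y, hy, hgy⟩ : ∃ y ∈ P \ A, 0 ≤ g y :=
    Finset.exists_le_of_sum_le hrest_ne (by simp [hrest])
  simp only [Finset.mem_sdiff] at hy
  have hA_nonneg : ∀ i ∈ A, 0 ≤ g i := fun i hi => hgy.trans (h.le i hi y hy.1 hy.2)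
  have hrest_nonpos : ∀ i ∈ P \ A, g i ≤ 0 := fun i hi =>
    (h.le x hx i (Finset.mem_sdiff.1 hi).1 (Finset.mem_sdiff.1 hi).2).trans hgx
  intro i hi
  by_cases hiA : i ∈ A
  · exact (Finset.sum_eq_zero_iff_of_nonneg hA_nonneg).1 hA i hiA
  · exact (Finset.sum_eq_zero_iff_of_nonpos hrest_nonpos).1 hrest i (Finset.mem_sdiff.2 ⟨hi, hiA⟩)

end IsTopPart

section StrictMono

variable {ι M : Type*} [AddCommMonoid M] [PartialOrder M] [IsOrderedCancelAddMonoid M] {v : ι → M}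
  {A P : Finset ι}

theorem sum_lt_sum_of_ssubset_of_pos (h : A ⊂ P) (hv : ∀ i ∈ P, 0 < v i) :
    ∑ i ∈ A, v i < ∑ i ∈ P, v i := by
  obtain ⟨i, hiP, hiA⟩ := Finset.exists_of_ssubset h
  exact Finset.sum_lt_sum_of_subset h.1 hiP hiA (hv i hiP) fun j hj _ => (hv j hj).le

theorem sum_lt_sum_of_ssubset_of_neg (h : A ⊂ P) (hv : ∀ i ∈ P, v i < 0) :
    ∑ i ∈ P, v i < ∑ i ∈ A, v i :=
  sum_lt_sum_of_ssubset_of_pos (M := Mᵒᵈ) h hv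

end StrictMono

theorem IsTopPart.eq_and_eq_of_sum_add_sum_eq_zero {ι M N : Type*} [AddCommGroup M] [PartialOrder M]
    [IsOrderedAddMonoid M] [AddCommGroup N] [LinearOrder N] [IsOrderedAddMonoid N] {v : ι → M}
    {A D P Q : Finset ι} (p : M →+ N)
    (hP : ∀ i ∈ P, 0 < v i) (hQ : ∀ i ∈ Q, v i < 0) (hPQ : ∑ i ∈ P, v i + ∑ i ∈ Q, v i = 0)
    (hpP : p (∑ i ∈ P, v i) = 0) (hp : ∃ i, (i ∈ P ∨ i ∈ Q) ∧ p (v i) ≠ 0)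
    (hA : IsTopPart (fun i => p (v i)) A P) (hD : IsTopPart (fun i => p (v i)) D Q)
    (hA_ne : A.Nonempty) (hAD : ∑ i ∈ A, v i + ∑ i ∈ D, v i = 0) : A = P ∧ D = Q := by
  have hA_pos : 0 < ∑ i ∈ A, v i := Finset.sum_pos (fun i hi => hP i (hA.subset hi)) hA_ne
  have hD_ne : D.Nonempty := by
    rw [Finset.nonempty_iff_ne_empty]
    rintro rfl
    simp [hA_pos.ne'] at hAD
  have hAP_of_hDQ : D = Q → A = P := fun hDQ => by
    by_contra hAP
    have hlt := sum_lt_sum_of_ssubset_of_pos (hA.subset.ssubset_of_ne hAP) hP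
    exact hlt.ne (add_right_cancel ((hDQ ▸ hAD).trans hPQ.symm))
  have hDQ_of_hAP : A = P → D = Q := fun hAP => by
    by_contra hDQ
    have hlt := sum_lt_sum_of_ssubset_of_neg (hD.subset.ssubset_of_ne hDQ) hQ
    exact hlt.ne' (add_left_cancel ((hAP ▸ hAD).trans hPQ.symm))
  by_cases hAP : A = P
  · exact ⟨hAP, hDQ_of_hAP hAP⟩
  have hDQ : D ≠ Q := mt hAP_of_hDQ hAP
  have hpP' : ∑ i ∈ P, p (v i) = 0 := by rw [← map_sum, hpP]
  have hpQ' : ∑ i ∈ Q, p (v i) = 0 := by simpa [hpP'] using congrArg p hPQ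
  have hpAD : ∑ i ∈ A, p (v i) + ∑ i ∈ D, p (v i) = 0 := by simpa using congrArg p hAD
  obtain ⟨hpA, hpD⟩ :=
    (add_eq_zero_iff_of_nonneg (hA.sum_nonneg hpP') (hD.sum_nonneg hpQ')).1 hpAD
  obtain ⟨i, hi | hi, hpi⟩ := hp
  · exact absurd (hA.eq_zero_of_sum_eq_zero hpP' hpA hA_ne hAP i hi) hpi
  · exact absurd (hD.eq_zero_of_sum_eq_zero hpQ' hpD hD_ne hDQ i hi) hpi

theorem exists_perm_lt_iff_antitoneOn_monotoneOn {α : Type*} [LinearOrder α] {n : ℕ}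
    (P : Fin n → Prop) (q : Fin n → α) :
    ∃ (σ : Equiv.Perm (Fin n)) (h : ℕ), (∀ i : Fin n, (i : ℕ) < h ↔ P (σ i)) ∧
      AntitoneOn (q ∘ σ) {i | (i : ℕ) < h} ∧ MonotoneOn (q ∘ σ) {i | h ≤ (i : ℕ)} := by
  classical
  let key : Fin n → αᵒᵈ ⊕ₗ α := fun i =>
    if P i then Sum.inlₗ (OrderDual.toDual (q i)) else Sum.inrₗ (q i)
  let σ := Tuple.sort key
  have hkey : ∀ i j, i ≤ j → key (σ i) ≤ key (σ j) := fun i j hij => Tuple.monotone_sort key hij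
  have hP : ∀ i j, j ≤ i → P (σ i) → P (σ j) := by
    intro i j hji hi
    by_contra hj
    simpa [key, hi, hj] using hkey j i hji
  have hcard : ∀ i : Fin n, (i : ℕ) < Finset.card {i | P (σ i)} ↔ P (σ i) := fun i =>
    Fin.lt_card_filter_univ_iff_apply_of_imp (fun i => P (σ i)) hP
  refine ⟨σ, Finset.card {i | P (σ i)}, hcard, fun i hi j hj hij => ?_, fun i hi j hj hij => ?_⟩
  · simpa [key, (hcard i).1 hi, (hcard j).1 hj] using hkey i j hij
  · simpa [key, (hcard i).not.1 (not_lt.2 hi), (hcard j).not.1 (not_lt.2 hj)] using hkey i j hij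

section FinSegments

variable {n s h t : ℕ}

theorem eq_of_filter_val_lt_eq (hsn : s ≤ n) (hhn : h ≤ n)
    (heq : Finset.univ.filter (fun i : Fin n => (i : ℕ) < s) =
      Finset.univ.filter (fun i : Fin n => (i : ℕ) < h)) : s = h := by
  simpa [Fin.card_filter_val_lt, hsn, hhn] using congrArg Finset.card heq

theorem eq_of_filter_le_val_eq (htn : t ≤ n) (hhn : h ≤ n)
    (heq : Finset.univ.filter (fun i : Fin n => t ≤ (i : ℕ)) =
      Finset.univ.filter (fun i : Fin n => h ≤ (i : ℕ))) : t = h := by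
  refine eq_of_filter_val_lt_eq htn hhn (Finset.ext fun i => ?_)
  simpa using not_congr (Finset.ext_iff.1 heq i)

theorem sum_filter_val_lt_add_sum_filter_le_val {M : Type*} [AddCommMonoid M] (v : Fin n → M)
    (h : ℕ) :
    ∑ i ∈ {i : Fin n | (i : ℕ) < h}, v i + ∑ i ∈ {i : Fin n | h ≤ (i : ℕ)}, v i = ∑ i, v i := by
  simpa only [not_lt] using
    Finset.sum_filter_add_sum_filter_not Finset.univ (fun i : Fin n => (i : ℕ) < h) v

section IsTopPart

variable {N : Type*} [Preorder N] {g : Fin n → N}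

theorem isTopPart_filter_val_lt (hg : AntitoneOn g {i | (i : ℕ) < h}) (hsh : s ≤ h) :
    IsTopPart g {i : Fin n | (i : ℕ) < s} {i : Fin n | (i : ℕ) < h} where
  subset := Finset.monotone_filter_right _ fun _ _ hi => hi.trans_le hsh
  le x hx y hy hys := by
    simp only [Finset.mem_filter_univ, not_lt] at hx hy hys
    exact hg (hx.trans_le hsh) hy (hx.trans_le hys).le

theorem isTopPart_filter_le_val (hg : MonotoneOn g {i | h ≤ (i : ℕ)}) (hht : h ≤ t) :
    IsTopPart g {i : Fin n | t ≤ (i : ℕ)} {i : Fin n | h ≤ (i : ℕ)} where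
  subset := Finset.monotone_filter_right _ fun _ _ hi => hht.trans hi
  le x hx y hy hyt := by
    simp only [Finset.mem_filter_univ, not_le] at hx hy hyt
    exact hg hy (hht.trans hx) (hyt.trans_le hx).le

end IsTopPart

theorem eq_and_eq_of_sum_filter_eq_neg_sum_filter {M N : Type*} [AddCommGroup M] [PartialOrder M]
    [IsOrderedAddMonoid M] [AddCommGroup N] [LinearOrder N] [IsOrderedAddMonoid N] {v : Fin n → M}
    (p : M →+ N)
    (hpos : ∀ i : Fin n, (i : ℕ) < h → 0 < v i) (hneg : ∀ i : Fin n, h ≤ (i : ℕ) → v i < 0)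
    (hsum : ∑ i, v i = 0) (hpS : p (∑ i ∈ {i : Fin n | (i : ℕ) < h}, v i) = 0)
    (hp : ∃ i, p (v i) ≠ 0) (hanti : AntitoneOn (fun i => p (v i)) {i | (i : ℕ) < h})
    (hmono : MonotoneOn (fun i => p (v i)) {i | h ≤ (i : ℕ)})
    (hs : 1 ≤ s) (hsh : s ≤ h) (hht : h ≤ t) (htn : t ≤ n)
    (heq : ∑ i ∈ {i : Fin n | (i : ℕ) < s}, v i = -∑ i ∈ {i : Fin n | t ≤ (i : ℕ)}, v i) :
    s = h ∧ t = h := by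
  have hhn : h ≤ n := hht.trans htn
  have hs_ne : (Finset.univ.filter fun i : Fin n => (i : ℕ) < s).Nonempty :=
    ⟨⟨0, by omega⟩, (Finset.mem_filter_univ _).2 hs⟩
  obtain ⟨hs_eq, ht_eq⟩ := IsTopPart.eq_and_eq_of_sum_add_sum_eq_zero p
    (by simpa using hpos) (by simpa using hneg)
    ((sum_filter_val_lt_add_sum_filter_le_val v h).trans hsum) hpS
    (by simpa [lt_or_ge] using hp)
    (isTopPart_filter_val_lt hanti hsh) (isTopPart_filter_le_val hmono hht) hs_ne
    (eq_neg_iff_add_eq_zero.1 heq)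
  exact ⟨eq_of_filter_val_lt_eq (hsh.trans hhn) hhn hs_eq, eq_of_filter_le_val_eq htn hhn ht_eq⟩

end FinSegments

/-- The reordering property of a finite family `w`: some rearrangement lists `h` positive entries
and then the negative ones, and the sum of the first `s ≥ 1` entries cancels the sum of the entries
from the `0`-based index `t` on, where `s ≤ h ≤ t`, only for `s = t = h`. -/
def ReorderingProperty {M : Type*} [AddCommGroup M] [LT M] {n : ℕ} (w : Fin n → M) : Prop :=
  ∃ (σ : Equiv.Perm (Fin n)) (h : ℕ), 1 ≤ h ∧ h ≤ n - 1 ∧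
    (∀ i : Fin n, (i : ℕ) < h → 0 < w (σ i)) ∧
    (∀ i : Fin n, h ≤ (i : ℕ) → w (σ i) < 0) ∧
    ∀ s t : ℕ, 1 ≤ s → s ≤ h → h ≤ t → t ≤ n →
      (∑ i ∈ Finset.univ.filter (fun i : Fin n => (i : ℕ) < s), w (σ i)) =
        -(∑ i ∈ Finset.univ.filter (fun i : Fin n => t ≤ (i : ℕ)), w (σ i)) →
      s = h ∧ t = h

section Reordering

variable {M : Type*} [AddCommGroup M] [LinearOrder M] [IsOrderedAddMonoid M]

theorem exists_pos_and_exists_neg_of_sum_eq_zero {ι : Type*} [Fintype ι] {w : ι → M}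
    (hsum : ∑ i, w i = 0) (hw : ∃ i, w i ≠ 0) : (∃ i, 0 < w i) ∧ ∃ i, w i < 0 := by
  have hpos : ∀ u : ι → M, ∑ i, u i = 0 → (∃ i, u i ≠ 0) → ∃ i, 0 < u i := fun u hu hne => by
    simpa using Finset.exists_pos_of_sum_zero_of_exists_nonzero u hu (by simpa using hne)
  exact ⟨hpos w hsum hw, by simpa using hpos (-w) (by simpa using hsum) (by simpa using hw)⟩

theorem reorderingProperty_of_addMonoidHom {N : Type*} [AddCommGroup N] [LinearOrder N]
    [IsOrderedAddMonoid N] {n : ℕ} {w : Fin n → M} (hw : ∀ i, w i ≠ 0) (hsum : ∑ i, w i = 0)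
    (p : M →+ N) (hpS : p (∑ i with 0 < w i, w i) = 0) (hp : ∃ i, p (w i) ≠ 0) :
    ReorderingProperty w := by
  obtain ⟨σ, h, hσ, hanti, hmono⟩ :=
    exists_perm_lt_iff_antitoneOn_monotoneOn (fun i => 0 < w i) (fun i => p (w i))
  have hneg : ∀ i : Fin n, h ≤ (i : ℕ) → w (σ i) < 0 := fun i hi =>
    (hw _).lt_of_le (not_lt.1 ((hσ i).not.1 hi.not_gt))
  have hS : ∑ i ∈ {i : Fin n | (i : ℕ) < h}, w (σ i) = ∑ i with 0 < w i, w i :=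
    Finset.sum_equiv σ (by simp [hσ]) fun _ _ => rfl
  obtain ⟨⟨i, hi⟩, ⟨j, hj⟩⟩ :=
    exists_pos_and_exists_neg_of_sum_eq_zero hsum (hp.imp fun i _ => hw i)
  have hih : (σ.symm i : ℕ) < h := (hσ _).2 (by simpa using hi)
  have hhj : h ≤ (σ.symm j : ℕ) := not_lt.1 ((hσ _).not.2 (by simpa using hj.le))
  refine ⟨σ, h, by omega, by omega, fun i => (hσ i).1, hneg, fun s t hs hsh hht htn heq => ?_⟩
  exact eq_and_eq_of_sum_filter_eq_neg_sum_filter p (fun i => (hσ i).1) hneg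
    ((Equiv.sum_comp σ w).trans hsum) (by rw [hS, hpS]) (σ.exists_congr_right.2 hp) hanti hmono
    hs hsh hht htn heq

end Reordering

section Span

theorem span_singleton_eq_of_mem {K V : Type*} [DivisionRing K] [AddCommGroup V] [Module K V]
    {y z : V} (hy : y ≠ 0) (hyz : y ∈ Submodule.span K {z}) :
    Submodule.span K {y} = Submodule.span K {z} := by
  obtain ⟨c, rfl⟩ := Submodule.mem_span_singleton.1 hyz
  exact Submodule.span_singleton_smul_eq (isUnit_iff_ne_zero.2 (left_ne_zero_of_smul hy)) z

theorem notMem_span_singleton_of_irrational_div {x y : ℝ} (h : Irrational (x / y)) :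
    x ∉ Submodule.span ℚ {y} := by
  rw [Submodule.mem_span_singleton]
  rintro ⟨q, rfl⟩
  have hy : y ≠ 0 := by
    rintro rfl
    simp at h
  exact h ⟨q, by simp [Rat.smul_def, hy]⟩

end Span

theorem reordering_property_of_irrational_ratio_general {M : Type*} [AddCommGroup M] [LinearOrder M]
    [IsOrderedAddMonoid M] [Module ℚ M] {n : ℕ} {w : Fin n → M} (hw : ∀ i, w i ≠ 0)
    (hsum : ∑ i, w i = 0) (hirr : ∃ i j, w i ∉ Submodule.span ℚ {w j}) : ReorderingProperty w := by
  obtain ⟨i, j, hij⟩ := hirr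
  obtain ⟨k, hk⟩ : ∃ k, w k ∉ Submodule.span ℚ {∑ i with 0 < w i, w i} := by
    by_contra! hS
    exact hij (span_singleton_eq_of_mem (hw j) (hS j) ▸ hS i)
  obtain ⟨p, hpk, hpS⟩ := Submodule.exists_le_ker_of_notMem hk
  exact reorderingProperty_of_addMonoidHom hw hsum p.toAddMonoidHom
    (hpS (Submodule.mem_span_singleton_self _)) ⟨k, hpk⟩

/-- If `w₁, …, w_n` are nonzero reals with zero sum (`n ≥ 2`) and some ratio `wᵢ/wⱼ` is
irrational, then the family satisfies the reordering property: there are a permutation `σ`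
and `1 ≤ h ≤ n - 1` such that the first `h` reordered numbers are positive, the remaining
ones are negative, and the partial-sum coincidence
`Σ_{i=1}^{s} w_{σ(i)} = − Σ_{j=t+1}^{n} w_{σ(j)}` (for `1 ≤ s ≤ h ≤ t ≤ n`) holds only for
`s = t = h`. (Indices of `Fin n` are `0`-based: the first `s` entries are those with
index `< s`, and the entries from `t+1` to `n` are those with index `≥ t`.) -/
theorem reordering_property_of_irrational_ratio (n : ℕ) (hn : 2 ≤ n) (w : Fin n → ℝ)
    (hw : ∀ i, w i ≠ 0) (hsum : ∑ i, w i = 0)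
    (hirr : ∃ i j, Irrational (w i / w j)) :
    ∃ (σ : Equiv.Perm (Fin n)) (h : ℕ), 1 ≤ h ∧ h ≤ n - 1 ∧
      (∀ i : Fin n, (i : ℕ) < h → 0 < w (σ i)) ∧
      (∀ i : Fin n, h ≤ (i : ℕ) → w (σ i) < 0) ∧
      ∀ s t : ℕ, 1 ≤ s → s ≤ h → h ≤ t → t ≤ n →
        (∑ i ∈ Finset.univ.filter (fun i : Fin n => (i : ℕ) < s), w (σ i)) =
          -(∑ i ∈ Finset.univ.filter (fun i : Fin n => t ≤ (i : ℕ)), w (σ i)) →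
        s = h ∧ t = h :=
  reordering_property_of_irrational_ratio_general hw hsum
    (hirr.imp fun _ => Exists.imp fun _ => notMem_span_singleton_of_irrational_div)
end

section
/- For all positive real numbers x, y such that x/y is irrational, and for every ε > 0, there exists a matrix (a b; c d) in SL₂(ℤ) (integer entries, determinant 1) such that 0 < a·x + b·y < ε and 0 < c·x + d·y < ε. -/
/-!
A subgroup of an archimedean ordered group is either cyclic or contains arbitrarily small positive
elements, and the subgroup generated by two independent elements `x`, `y` is not cyclic. Dividing a
small positive combination `m x + n y` by `gcd(m, n)` makes it smaller still, and gives coefficients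
`a`, `b` that form the first row of a matrix in `SL₂(ℤ)`. Adding a multiple of this row to the
second one is Euclidean division by `a x + b y`: it puts the second value into `(0, a x + b y]`.
-/

open Set

theorem linearIndependent_int_pair_of_irrational_div {x y : ℝ} (h : Irrational (x / y)) :
    LinearIndependent ℤ ![x, y] := by
  have hy : y ≠ 0 := (div_ne_zero_iff.mp h.ne_zero).2
  rw [LinearIndependent.pair_iff]
  intro s t hst
  simp only [zsmul_eq_mul] at hst
  obtain rfl : s = 0 := by
    by_contra hs
    refine (h.intCast_mul hs).ne_int (-t) ?_
    push_cast
    field_simp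
    linear_combination hst
  simpa [hy] using hst

theorem closure_pair_ne_closure_singleton {G : Type*} [AddCommGroup G] {x y : G}
    (h : LinearIndependent ℤ ![x, y]) (g : G) :
    AddSubgroup.closure {x, y} ≠ AddSubgroup.closure {g} := by
  intro hg
  obtain ⟨m, rfl⟩ : ∃ m : ℤ, m • g = x :=
    AddSubgroup.mem_closure_singleton.mp (hg ▸ AddSubgroup.subset_closure (by simp))
  obtain ⟨n, rfl⟩ : ∃ n : ℤ, n • g = y :=
    AddSubgroup.mem_closure_singleton.mp (hg ▸ AddSubgroup.subset_closure (by simp))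
  have hm : m = 0 := by
    have hrel : n • m • g + (-m) • n • g = 0 := by module
    simpa using (LinearIndependent.pair_iff.mp h _ _ hrel).2
  exact h.ne_zero 0 (by simp [hm])

section OrderedGroup

variable {G : Type*} [AddCommGroup G] [LinearOrder G] [IsOrderedAddMonoid G] {x y : G}

theorem exists_isCoprime_smul_add_smul_le {z : G} (hz : z ∈ AddSubgroup.closure {x, y})
    (hz₀ : 0 < z) : ∃ a b : ℤ, IsCoprime a b ∧ 0 < a • x + b • y ∧ a • x + b • y ≤ z := by
  obtain ⟨m, n, rfl⟩ := AddSubgroup.mem_closure_pair.mp hz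
  have hgcd : 0 < Int.gcd m n := by
    rw [Int.gcd_pos_iff]
    by_contra! h
    simp [h.1, h.2] at hz₀
  obtain ⟨g, a, b, hg, hab, rfl, rfl⟩ := Int.exists_gcd_one' hgcd
  have hfactor : (a * (g : ℤ)) • x + (b * (g : ℤ)) • y = g • (a • x + b • y) := by module
  rw [hfactor] at hz₀ ⊢
  have hpos : 0 < a • x + b • y := (nsmul_pos_iff hg.ne').mp hz₀
  exact ⟨a, b, Int.isCoprime_iff_gcd_eq_one.mpr hab, hpos, le_self_nsmul hpos.le hg.ne'⟩

variable [Archimedean G]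

theorem exists_mem_closure_pair_mem_Ioo (h : LinearIndependent ℤ ![x, y]) {ε : G} (hε : 0 < ε) :
    ∃ z ∈ AddSubgroup.closure {x, y}, z ∈ Ioo 0 ε := by
  by_contra! hisolated
  obtain ⟨g, hg⟩ := AddSubgroup.cyclic_of_isolated_zero hε (disjoint_left.mpr hisolated)
  exact closure_pair_ne_closure_singleton h g hg

theorem exists_det_eq_one_smul_add_smul_mem_Ioc {a b : ℤ} (hab : IsCoprime a b)
    (hpos : 0 < a • x + b • y) :
    ∃ c d : ℤ, a * d - b * c = 1 ∧ c • x + d • y ∈ Ioc 0 (a • x + b • y) := by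
  obtain ⟨s, t, hst⟩ := hab
  obtain ⟨k, hk, -⟩ := existsUnique_add_zsmul_mem_Ioc hpos (-t • x + s • y) 0
  have hrow : (-t + k * a) • x + (s + k * b) • y = -t • x + s • y + k • (a • x + b • y) := by module
  refine ⟨-t + k * a, s + k * b, by linear_combination hst, ?_⟩
  rwa [zero_add, ← hrow] at hk

theorem sl2_shrinks_irrational_pair_general (h : LinearIndependent ℤ ![x, y]) {ε : G}
    (hε : 0 < ε) :
    ∃ a b c d : ℤ, a * d - b * c = 1 ∧ a • x + b • y ∈ Ioo 0 ε ∧ c • x + d • y ∈ Ioo 0 ε := by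
  obtain ⟨z, hz, hz₀, hzε⟩ := exists_mem_closure_pair_mem_Ioo h hε
  obtain ⟨a, b, hab, hpos, hle⟩ := exists_isCoprime_smul_add_smul_le hz hz₀
  obtain ⟨c, d, hdet, hpos', hle'⟩ := exists_det_eq_one_smul_add_smul_mem_Ioc hab hpos
  have hlt : a • x + b • y < ε := hle.trans_lt hzε
  exact ⟨a, b, c, d, hdet, ⟨hpos, hlt⟩, hpos', hle'.trans_lt hlt⟩

end OrderedGroup

/-- For positive reals `x, y` with `x/y` irrational and any `ε > 0`, there is a matrix
`(a b; c d)` in `SL₂(ℤ)` such that `0 < a·x + b·y < ε` and `0 < c·x + d·y < ε`. -/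
theorem sl2_shrinks_irrational_pair (x y : ℝ) (hx : 0 < x) (hy : 0 < y)
    (hirr : Irrational (x / y)) (ε : ℝ) (hε : 0 < ε) :
    ∃ a b c d : ℤ, a * d - b * c = 1 ∧
      0 < (a : ℝ) * x + (b : ℝ) * y ∧ (a : ℝ) * x + (b : ℝ) * y < ε ∧
      0 < (c : ℝ) * x + (d : ℝ) * y ∧ (c : ℝ) * x + (d : ℝ) * y < ε := by
  simpa only [zsmul_eq_mul, mem_Ioo, and_assoc] using
    sl2_shrinks_irrational_pair_general (linearIndependent_int_pair_of_irrational_div hirr) hε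
end
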